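/- For h ≥ 2, m ≥ 2 and k ≥ h+1, the PFA P_{h,m}^n on n = (m+1)k states is carefully synchronizing, and its shortest carefully synchronizing word has length at least f_{h,m}(k), where f_{h,m}(k) = 0 for 1 ≤ k ≤ h and f_{h,m}(k) = (m−1)·(1 + Σ_{j=1}^{h} f_{h,m}(k−j)) for k ≥ h+1. -/

import Mathlib

/-- One step of a PFA on an `Option` state. -/
def pfaStep {Q σ : Type*} (δ : Q → σ → Option Q) (o : Option Q) (a : σ) : Option Q :=
  o.bind fun q => δ q a

/-- The (partial) state reached from `q` after reading word `w` in the PFA `δ`. -/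
def pfaRun {Q σ : Type*} (δ : Q → σ → Option Q) (q : Q) (w : List σ) : Option Q :=
  w.foldl (pfaStep δ) (some q)

/-- A word `w` is carefully synchronizing for the PFA `δ`. -/
def IsCareSyncWord {Q σ : Type*} (δ : Q → σ → Option Q) (w : List σ) : Prop :=
  ∃ qs : Q, ∀ q : Q, pfaRun δ q w = some qs

/-- The three symbols `s`, `r`, `c` of the PFA `P_{h,m}^n`. -/
inductive PSym : Type
  | s
  | r
  | c
  deriving DecidableEq

/-- The PFA `P_{h,m}^n` on `n = (m+1)k` states.  A state `(t, i)` with `t < m`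
represents `A_{i+1}^{(t+1)}`, and `(t, i)` with `t = m` represents `C_{i+1}`. -/
def PHMdelta (h m k : ℕ) (hh : 2 ≤ h) (hm : 2 ≤ m) (hk : h + 1 ≤ k) :
    Fin (m + 1) × Fin k → PSym → Option (Fin (m + 1) × Fin k) := fun q x =>
  match x with
  | PSym.s =>
      -- X_i s = C_i for i = 1,…,h and X_i s = A_i^{(1)} otherwise
      if q.2.val < h then some (⟨m, by omega⟩, q.2) else some (⟨0, by omega⟩, q.2)
  | PSym.c =>
      -- cyclic shift of the index
      some (q.1, ⟨(q.2.val + 1) % k, Nat.mod_lt _ (by omega)⟩)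
  | PSym.r =>
      if q.2.val < h then
        -- i = 1,…,h : A_i^{(t)} r undefined for t ≤ m−1, A_i^{(m)} r = A_i^{(1)}, C_i r = C_i
        (if q.1.val = m then some q
         else if q.1.val = m - 1 then some (⟨0, by omega⟩, q.2)
         else none)
      else if q.2.val = h then
        -- i = h+1 : A^{(t)} ↦ A^{(t+1)} for t ≤ m−1, A^{(m)} r undefined, C ↦ A_h^{(m)}
        (if hq0 : q.1.val = m then some (⟨m - 1, by omega⟩, ⟨h - 1, by omega⟩)
         else if hq1 : q.1.val = m - 1 then none
         else some (⟨q.1.val + 1, by have := q.1.isLt; omega⟩, q.2))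
      else some q

section PartialRuns

variable {Q σ : Type*} (δ : Q → σ → Option Q)

theorem foldl_pfaStep_none (w : List σ) : w.foldl (pfaStep δ) none = none := by
  induction w with
  | nil => rfl
  | cons a w ih => simpa [pfaStep] using ih

theorem pfaRun_nil (q : Q) : pfaRun δ q [] = some q := rfl

theorem pfaRun_append (q : Q) (u v : List σ) :
    pfaRun δ q (u ++ v) = (pfaRun δ q u).bind fun p => pfaRun δ p v := by
  unfold pfaRun
  rw [List.foldl_append]
  cases List.foldl (pfaStep δ) (some q) u with
  | none => simp [foldl_pfaStep_none]
  | some p => rfl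

theorem pfaRun_singleton (q : Q) (a : σ) : pfaRun δ q [a] = δ q a := rfl

theorem pfaRun_cons (q : Q) (a : σ) (w : List σ) :
    pfaRun δ q (a :: w) = (δ q a).bind fun p => pfaRun δ p w :=
  pfaRun_append δ q [a] w

/-- A map intertwining two partial transition functions intertwines their runs. -/
theorem pfaRun_map {Q' : Type*} (δ' : Q' → σ → Option Q') (φ : Q → Q')
    (hφ : ∀ q a, δ' (φ q) a = (δ q a).map φ) (q : Q) (w : List σ) :
    pfaRun δ' (φ q) w = (pfaRun δ q w).map φ := by
  induction w generalizing q with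
  | nil => rfl
  | cons a w ih =>
    rw [pfaRun_cons, pfaRun_cons, hφ]
    cases δ q a with
    | none => rfl
    | some p => exact ih p

end PartialRuns

/-- The transition function of `P_{h,m}^n` on pairs of natural numbers (level, index). -/
def natDelta (h m k : ℕ) (q : ℕ × ℕ) (x : PSym) : Option (ℕ × ℕ) :=
  match x with
  | PSym.s => if q.2 < h then some (m, q.2) else some (0, q.2)
  | PSym.c => some (q.1, (q.2 + 1) % k)
  | PSym.r =>
      if q.2 < h then
        (if q.1 = m then some q else if q.1 = m - 1 then some (0, q.2) else none)
      else if q.2 = h then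
        (if q.1 = m then some (m - 1, h - 1)
         else if q.1 = m - 1 then none else some (q.1 + 1, q.2))
      else some q

/-- The pair of natural numbers underlying a state. -/
def stateVal {m k : ℕ} (q : Fin (m + 1) × Fin k) : ℕ × ℕ := (q.1.val, q.2.val)

theorem stateVal_injective {m k : ℕ} : Function.Injective (stateVal (m := m) (k := k)) := by
  rintro ⟨a, b⟩ ⟨c, d⟩ hq
  simp only [stateVal, Prod.mk.injEq] at hq
  exact Prod.ext (Fin.ext hq.1) (Fin.ext hq.2)

theorem natDelta_stateVal (h m k : ℕ) (hh : 2 ≤ h) (hm : 2 ≤ m) (hk : h + 1 ≤ k)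
    (q : Fin (m + 1) × Fin k) (x : PSym) :
    natDelta h m k (stateVal q) x = (PHMdelta h m k hh hm hk q x).map stateVal := by
  cases x with
  | c => rfl
  | s =>
    simp only [natDelta, PHMdelta, stateVal]
    by_cases h₁ : q.2.val < h <;> simp [h₁, stateVal]
  | r =>
    have hm' : m - 1 ≠ m := by omega
    simp only [natDelta, PHMdelta, stateVal]
    by_cases h₁ : q.2.val < h <;> by_cases h₂ : q.2.val = h <;> by_cases h₃ : q.1.val = m <;>
      by_cases h₄ : q.1.val = m - 1 <;> simp [h₁, h₂, h₃, h₄, hm', stateVal]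

theorem isCareSyncWord_iff_natDelta (h m k : ℕ) (hh : 2 ≤ h) (hm : 2 ≤ m) (hk : h + 1 ≤ k)
    (w : List PSym) :
    IsCareSyncWord (PHMdelta h m k hh hm hk) w ↔
      ∃ p, ∀ t i, t ≤ m → i < k → pfaRun (natDelta h m k) (t, i) w = some p := by
  have hrun := pfaRun_map _ _ stateVal (natDelta_stateVal h m k hh hm hk)
  constructor
  · rintro ⟨qs, hqs⟩
    refine ⟨stateVal qs, fun t i ht hi => ?_⟩
    have := hrun (⟨t, by omega⟩, ⟨i, hi⟩) w
    rw [hqs] at this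
    exact this
  · rintro ⟨p, hp⟩
    have hval : ∀ q, (pfaRun (PHMdelta h m k hh hm hk) q w).map stateVal = some p := fun q => by
      rw [← hrun]
      exact hp _ _ (by omega) q.2.isLt
    obtain ⟨qs, hqs, hqp⟩ := Option.map_eq_some_iff.1 (hval (⟨0, by omega⟩, ⟨0, by omega⟩))
    refine ⟨qs, fun q => ?_⟩
    obtain ⟨q', hq', hq'p⟩ := Option.map_eq_some_iff.1 (hval q)
    rw [hq', stateVal_injective (hq'p.trans hqp.symm)]

section LowerBound

/-- The position of token `i` after the cyclic arrangement was rotated by `o ∈ [1, k]`. -/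
def rotPos (k o i : ℕ) : ℕ := if i + o < k then i + o else i + o - k

/-- The number of `r`-moves that an increment of the level of token `i` accounts for. -/
def stepWeight (h : ℕ) (f : ℕ → ℕ) (i : ℕ) : ℕ := 1 + ∑ t ∈ Finset.Icc 1 h, f (i + 1 - t)

/-- The number of `r`-moves needed to build up the levels `l` from a reset. -/
def potential (h k : ℕ) (f l : ℕ → ℕ) : ℕ := ∑ i ∈ Finset.Ico h k, l i * stepWeight h f i

/-- The levels after an `r`-move with token `j` at index `h`. -/
def carryLevels (h : ℕ) (l : ℕ → ℕ) (j i : ℕ) : ℕ :=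
  if i = j then l j + 1 else if h ≤ i ∧ j ≤ i + h ∧ i < j then 0 else l i

variable {h m k : ℕ} {f : ℕ → ℕ}

theorem sum_window (hf0 : ∀ j : ℕ, 1 ≤ j → j ≤ h → f j = 0) {j : ℕ} (hj : h ≤ j) (hjk : j < k) :
    ∑ i ∈ Finset.Ico h k, (if j ≤ i + h ∧ i < j then f (i + 1) else 0) =
      ∑ t ∈ Finset.Icc 1 h, f (j + 1 - t) := by
  have hreindex : ∑ t ∈ Finset.Icc 1 h, f (j + 1 - t) = ∑ i ∈ Finset.Ico (j - h) j, f (i + 1) := by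
    refine Finset.sum_nbij' (fun t => j - t) (fun i => j - i) ?_ ?_ ?_ ?_ ?_
    · intro t ht; simp only [Finset.mem_Icc, Finset.mem_Ico] at ht ⊢; omega
    · intro t ht; simp only [Finset.mem_Icc, Finset.mem_Ico] at ht ⊢; omega
    · intro t ht; simp only [Finset.mem_Icc] at ht; omega
    · intro t ht; simp only [Finset.mem_Ico] at ht; omega
    · intro t ht; simp only [Finset.mem_Icc] at ht; congr 1; omega
  rw [hreindex, ← Finset.sum_filter]
  refine Finset.sum_subset ?_ ?_
  · intro i hi; simp only [Finset.mem_filter, Finset.mem_Ico] at hi ⊢; omega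
  · intro i hi hi'
    simp only [Finset.mem_filter, Finset.mem_Ico] at hi hi'
    exact hf0 _ (by omega) (by omega)

theorem potential_carryLevels
    (hf0 : ∀ j : ℕ, 1 ≤ j → j ≤ h → f j = 0)
    (hfrec : ∀ j : ℕ, h + 1 ≤ j → f j = (m - 1) * (1 + ∑ i ∈ Finset.Icc 1 h, f (j - i)))
    {l : ℕ → ℕ} {j : ℕ} (hj : h ≤ j) (hjk : j < k)
    (hfull : ∀ i, h ≤ i → j ≤ i + h → i < j → l i = m - 1) :
    potential h k f (carryLevels h l j) = potential h k f l + 1 := by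
  have hpoint : ∀ i ∈ Finset.Ico h k,
      carryLevels h l j i * stepWeight h f i + (if j ≤ i + h ∧ i < j then f (i + 1) else 0) =
        l i * stepWeight h f i + (if i = j then stepWeight h f j else 0) := by
    intro i hi
    rw [Finset.mem_Ico] at hi
    unfold carryLevels
    by_cases hij : i = j
    · subst hij; simp; ring
    · by_cases hw : j ≤ i + h ∧ i < j
      · rw [if_neg hij, if_pos ⟨hi.1, hw⟩, if_pos hw, if_neg hij, hfull i hi.1 hw.1 hw.2,
          hfrec (i + 1) (by omega)]
        simp [stepWeight]
      · rw [if_neg hij, if_neg (fun hc => hw hc.2), if_neg hw, if_neg hij]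
  have hsum := Finset.sum_congr rfl hpoint
  rw [Finset.sum_add_distrib, Finset.sum_add_distrib, sum_window hf0 hj hjk,
    Finset.sum_ite_eq' (Finset.Ico h k) j, if_pos (Finset.mem_Ico.2 ⟨hj, hjk⟩)] at hsum
  unfold potential
  simp only [stepWeight] at hsum ⊢
  omega

theorem le_potential_of_last (hk : h + 1 ≤ k)
    (hfrec : ∀ j : ℕ, h + 1 ≤ j → f j = (m - 1) * (1 + ∑ i ∈ Finset.Icc 1 h, f (j - i)))
    {l : ℕ → ℕ} (hl : l (k - 1) = m - 1) : f k ≤ potential h k f l := by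
  have hmem : k - 1 ∈ Finset.Ico h k := Finset.mem_Ico.2 (by omega)
  refine le_trans (le_of_eq ?_) (Finset.single_le_sum (fun i _ => Nat.zero_le _) hmem)
  rw [hl, hfrec k hk, stepWeight, Nat.sub_add_cancel (by omega)]

theorem le_potential_add_length (hh : 2 ≤ h) (hm : 2 ≤ m) (hk : h + 1 ≤ k)
    (hf0 : ∀ j : ℕ, 1 ≤ j → j ≤ h → f j = 0)
    (hfrec : ∀ j : ℕ, h + 1 ≤ j → f j = (m - 1) * (1 + ∑ i ∈ Finset.Icc 1 h, f (j - i)))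
    (p : ℕ × ℕ) (v : List PSym) (o : ℕ) (l : ℕ → ℕ) (ho : 1 ≤ o) (hok : o ≤ k)
    (hC : ∀ i < h, l i = m) (hA : ∀ i, h ≤ i → i < k → l i < m)
    (hrun : ∀ i < k, pfaRun (natDelta h m k) (l i, rotPos k o i) v = some p) :
    f k ≤ potential h k f l + v.length := by
  induction v generalizing o l with
  | nil =>
    exfalso
    have h0 := hrun 0 (by omega)
    have h1 := hrun 1 (by omega)
    rw [pfaRun_nil, Option.some.injEq] at h0 h1
    have h01 := congrArg Prod.snd (h0.trans h1.symm)
    simp only [rotPos] at h01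
    split_ifs at h01 <;> omega
  | cons a v ih =>
    cases a with
    | c =>
      have := ih (if o = k then 1 else o + 1) l (by split_ifs <;> omega)
        (by split_ifs <;> omega) hC hA (fun i hi => by
          have hi' := hrun i hi
          rw [pfaRun_cons] at hi'
          have hpos : (rotPos k o i + 1) % k = rotPos k (if o = k then 1 else o + 1) i := by
            have hlt : rotPos k o i < k := by unfold rotPos; split_ifs <;> omega
            by_cases hlast : rotPos k o i + 1 = k
            · rw [hlast, Nat.mod_self]
              unfold rotPos at *
              split_ifs at * <;> omega
            · rw [Nat.mod_eq_of_lt (by omega)]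
              unfold rotPos at *
              split_ifs at * <;> omega
          rw [← hpos]
          exact hi')
      rw [List.length_cons]
      omega
    | s =>
      have := ih k (fun i => if i < h then m else 0) (by omega) le_rfl
        (fun i hi => if_pos hi) (fun i hi _ => by simp only [if_neg (not_lt.2 hi)]; omega)
        (fun i hi => by
          obtain ⟨t, ht, hti⟩ : ∃ t < k, rotPos k o t = i := by
            by_cases hoi : o ≤ i
            · exact ⟨i - o, by omega, by unfold rotPos; split_ifs <;> omega⟩
            · exact ⟨i + k - o, by omega, by unfold rotPos; split_ifs <;> omega⟩
          have hi' := hrun t ht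
          rw [hti, pfaRun_cons] at hi'
          have hik : rotPos k k i = i := by unfold rotPos; split_ifs <;> omega
          rw [hik]
          simp only [natDelta] at hi'
          split_ifs at hi' ⊢ <;> exact hi')
      have hzero : potential h k f (fun i => if i < h then m else 0) = 0 :=
        Finset.sum_eq_zero fun i hi => by
          simp only [if_neg (not_lt.2 (Finset.mem_Ico.1 hi).1), zero_mul]
      rw [List.length_cons]
      omega
    | r =>
      have hstep : ∀ i < k, ∃ q, natDelta h m k (l i, rotPos k o i) PSym.r = some q ∧
          pfaRun (natDelta h m k) q v = some p := fun i hi => by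
        have hi' := hrun i hi
        rwa [pfaRun_cons, Option.bind_eq_some_iff] at hi'
      rw [List.length_cons]
      by_cases hoh : o ≤ h
      · obtain ⟨q, hq, -⟩ := hstep (k - 1) (by omega)
        have hpos : rotPos k o (k - 1) < h := by unfold rotPos; split_ifs <;> omega
        have hlast := hA (k - 1) (by omega) (by omega)
        have hl : l (k - 1) = m - 1 := by
          simp only [natDelta, if_pos hpos, if_neg (ne_of_lt hlast)] at hq
          by_contra hne
          simp [hne] at hq
        exact (le_potential_of_last hk hfrec hl).trans (Nat.le_add_right _ _)
      · obtain ⟨j, hj⟩ : ∃ j, j = h + k - o := ⟨_, rfl⟩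
        have hlj : l j < m - 1 := by
          obtain ⟨q, hq, -⟩ := hstep j (by omega)
          have hpos : rotPos k o j = h := by unfold rotPos; split_ifs <;> omega
          have hlt := hA j (by omega) (by omega)
          simp only [natDelta, hpos, lt_irrefl, if_false, if_true, if_neg (ne_of_lt hlt)] at hq
          by_contra hge
          rw [if_pos (by omega)] at hq
          simp at hq
        have hfull : ∀ i, h ≤ i → j ≤ i + h → i < j → l i = m - 1 := by
          intro i hi hji hij
          obtain ⟨q, hq, -⟩ := hstep i (by omega)
          have hpos : rotPos k o i < h := by unfold rotPos; split_ifs <;> omega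
          have hlt := hA i hi (by omega)
          simp only [natDelta, if_pos hpos, if_neg (ne_of_lt hlt)] at hq
          by_contra hne
          simp [hne] at hq
        have := ih o (carryLevels h l j) ho hok
          (fun i hi => by
            unfold carryLevels
            rw [if_neg (by omega), if_neg (by omega), hC i hi])
          (fun i hi hik => by
            have := hA i hi hik
            unfold carryLevels
            split_ifs <;> omega)
          (fun i hi => by
            obtain ⟨q, hq, hqv⟩ := hstep i hi
            suffices hqe : q = (carryLevels h l j i, rotPos k o i) by rwa [← hqe]
            have hpos : (rotPos k o i < h ↔ j ≤ i + h ∧ i < j) ∧ (rotPos k o i = h ↔ i = j) := by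
              unfold rotPos; split_ifs <;> omega
            have hCi := hC i
            have hAi := hA i
            have hfi := hfull i
            simp only [natDelta] at hq
            unfold carryLevels
            by_cases hij : i = j
            · have hph := hpos.2.2 hij
              subst hij
              rw [if_neg (by omega), if_pos hph, if_neg (by omega), if_neg (by omega),
                Option.some.injEq] at hq
              rw [if_pos rfl, ← hq]
            · rw [if_neg hij]
              by_cases hw : j ≤ i + h ∧ i < j
              · rw [if_pos (hpos.1.2 hw)] at hq
                by_cases hih : h ≤ i
                · rw [if_neg (by omega), if_pos (hfi hih hw.1 hw.2), Option.some.injEq] at hq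
                  rw [if_pos ⟨hih, hw⟩, ← hq]
                · rw [if_pos (hCi (by omega)), Option.some.injEq] at hq
                  rw [if_neg (by omega), ← hq]
              · rw [if_neg (fun hc => hw (hpos.1.1 hc)), if_neg (fun hc => hij (hpos.2.1 hc)),
                  Option.some.injEq] at hq
                rw [if_neg (fun hc => hw hc.2), ← hq])
        rw [potential_carryLevels hf0 hfrec (by omega) (by omega) hfull] at this
        omega

theorem le_length_of_sync (hh : 2 ≤ h) (hm : 2 ≤ m) (hk : h + 1 ≤ k)
    (hf0 : ∀ j : ℕ, 1 ≤ j → j ≤ h → f j = 0)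
    (hfrec : ∀ j : ℕ, h + 1 ≤ j → f j = (m - 1) * (1 + ∑ i ∈ Finset.Icc 1 h, f (j - i)))
    (p : ℕ × ℕ) (w : List PSym)
    (hw : ∀ t i, t ≤ m → i < k → pfaRun (natDelta h m k) (t, i) w = some p) :
    f k ≤ w.length := by
  induction w with
  | nil =>
    have h01 := (hw 0 0 (by omega) (by omega)).trans (hw 1 0 (by omega) (by omega)).symm
    simp [pfaRun_nil] at h01
  | cons a w ih =>
    rw [List.length_cons]
    cases a with
    | c =>
      refine (ih fun t i ht hi => ?_).trans (Nat.le_succ _)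
      by_cases hi0 : i = 0
      · have := hw t (k - 1) ht (by omega)
        rw [pfaRun_cons] at this
        simpa [natDelta, hi0, Nat.sub_add_cancel (show 1 ≤ k by omega)] using this
      · have := hw t (i - 1) ht (by omega)
        rw [pfaRun_cons] at this
        simpa [natDelta, Nat.sub_add_cancel (show 1 ≤ i by omega), Nat.mod_eq_of_lt hi] using this
    | r =>
      have := hw 0 0 (by omega) (by omega)
      rw [pfaRun_cons] at this
      simp only [natDelta] at this
      rw [if_pos (by omega), if_neg (by omega), if_neg (by omega)] at this
      simp at this
    | s =>
      have hbound := le_potential_add_length hh hm hk hf0 hfrec p w k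
        (fun i => if i < h then m else 0) (by omega) le_rfl (fun i hi => if_pos hi)
        (fun i hi _ => by simp only [if_neg (not_lt.2 hi)]; omega)
        (fun i hi => by
          have hi' := hw 0 i (by omega) hi
          rw [pfaRun_cons] at hi'
          have hik : rotPos k k i = i := by unfold rotPos; split_ifs <;> omega
          rw [hik]
          simp only [natDelta] at hi'
          split_ifs at hi' ⊢ <;> exact hi')
      have hzero : potential h k f (fun i => if i < h then m else 0) = 0 :=
        Finset.sum_eq_zero fun i hi => by
          simp only [if_neg (not_lt.2 (Finset.mem_Ico.1 hi).1), zero_mul]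
      omega

end LowerBound

section Existence

/-- Levels of the tokens: `C` exactly for the tokens below `h`. -/
def ValidLevels (h m k : ℕ) (l : ℕ → ℕ) : Prop :=
  (∀ i < h, l i = m) ∧ ∀ i, h ≤ i → i < k → l i < m

/-- Some word transforms the levels `l` into `l'`, keeping all tokens in place. -/
def Reaches (h m k : ℕ) (l l' : ℕ → ℕ) : Prop :=
  ∃ w, ∀ i < k, pfaRun (natDelta h m k) (l i, i) w = some (l' i, i)

variable {h m k : ℕ}

theorem Reaches.trans {l₁ l₂ l₃ : ℕ → ℕ} (h₁ : Reaches h m k l₁ l₂) (h₂ : Reaches h m k l₂ l₃) :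
    Reaches h m k l₁ l₃ := by
  obtain ⟨u, hu⟩ := h₁
  obtain ⟨v, hv⟩ := h₂
  exact ⟨u ++ v, fun i hi => by rw [pfaRun_append, hu i hi, Option.bind_some, hv i hi]⟩

theorem pfaRun_replicate_c (t i n : ℕ) (hi : i < k) :
    pfaRun (natDelta h m k) (t, i) (List.replicate n PSym.c) = some (t, (i + n) % k) := by
  induction n with
  | zero => simp [pfaRun_nil, Nat.mod_eq_of_lt hi]
  | succ n ih =>
    rw [List.replicate_succ', pfaRun_append, ih, Option.bind_some, pfaRun_singleton]
    simp [natDelta, Nat.add_assoc]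

theorem reaches_carryLevels {l : ℕ → ℕ} {j : ℕ} (hl : ValidLevels h m k l) (hj : h ≤ j)
    (hjk : j < k) (hlj : l j < m - 1) (hfull : ∀ i, h ≤ i → i < j → l i = m - 1) :
    Reaches h m k l (carryLevels h l j) := by
  refine ⟨List.replicate (k + h - j) PSym.c ++ PSym.r :: List.replicate (j - h) PSym.c,
    fun i hi => ?_⟩
  rw [pfaRun_append, pfaRun_replicate_c _ _ _ hi, Option.bind_some, pfaRun_cons]
  obtain ⟨x, hx⟩ : ∃ x, x = (i + (k + h - j)) % k := ⟨_, rfl⟩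
  have hxval : x = if i + h < j then i + (k + h - j) else i + h - j := by
    split_ifs with hc
    · rw [hx, Nat.mod_eq_of_lt (by omega)]
    · rw [hx, show i + (k + h - j) = (i + h - j) + k by omega, Nat.add_mod_right,
        Nat.mod_eq_of_lt (by omega)]
  have hxk : x < k := by split_ifs at hxval <;> omega
  have hback : (x + (j - h)) % k = i := by
    rw [hx, Nat.mod_add_mod, show i + (k + h - j) + (j - h) = i + k by omega, Nat.add_mod_right,
      Nat.mod_eq_of_lt hi]
  rw [← hx]
  have hstep : natDelta h m k (l i, x) PSym.r = some (carryLevels h l j i, x) := by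
    have hCi := hl.1 i
    have hAi := hl.2 i
    have hfi := hfull i
    have hpos : (x < h ↔ j ≤ i + h ∧ i < j) ∧ (x = h ↔ i = j) := by
      split_ifs at hxval <;> omega
    simp only [natDelta]
    unfold carryLevels
    by_cases hij : i = j
    · have hph := hpos.2.2 hij
      subst hij
      rw [if_neg (by omega), if_pos hph, if_neg (by omega), if_neg (by omega), if_pos rfl]
    · rw [if_neg hij]
      by_cases hw : j ≤ i + h ∧ i < j
      · rw [if_pos (hpos.1.2 hw)]
        by_cases hih : h ≤ i
        · have := hAi hih hi
          rw [if_neg (by omega), if_pos (hfi hih hw.2), if_pos ⟨hih, hw⟩]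
        · rw [if_pos (hCi (by omega)), if_neg (fun hc => hih hc.1)]
      · rw [if_neg (fun hc => hw (hpos.1.1 hc)), if_neg (fun hc => hij (hpos.2.1 hc)),
          if_neg (fun hc => hw hc.2)]
  rw [hstep, Option.bind_some, pfaRun_replicate_c _ _ _ hxk, hback]

/-- All counting tokens below `j` can be brought to their top level, the others untouched. -/
theorem exists_reaches_top (j : ℕ) (hj : h ≤ j) (hjk : j ≤ k) (l : ℕ → ℕ)
    (hl : ValidLevels h m k l) :
    ∃ l', ValidLevels h m k l' ∧ Reaches h m k l l' ∧ (∀ i, h ≤ i → i < j → l' i = m - 1) ∧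
      ∀ i, j ≤ i → i < k → l' i = l i := by
  induction j, hj using Nat.le_induction generalizing l with
  | base => exact ⟨l, hl, ⟨[], fun i _ => pfaRun_nil _ _⟩, fun i _ _ => by omega, fun _ _ _ => rfl⟩
  | succ j hj ih =>
    obtain ⟨d, hd⟩ : ∃ d, d = m - 1 - l j := ⟨_, rfl⟩
    induction d generalizing l with
    | zero =>
      obtain ⟨l', hl', hr, htop, hrest⟩ := ih (by omega) l hl
      refine ⟨l', hl', hr, fun i hi hij => ?_, fun i hi hik => hrest i (by omega) hik⟩
      by_cases hlt : i < j
      · exact htop i hi hlt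
      · have := hrest j le_rfl (by omega)
        have := hl.2 j hj (by omega)
        obtain rfl : i = j := by omega
        omega
    | succ d ihd =>
      obtain ⟨l₁, hl₁, hr₁, htop₁, hrest₁⟩ := ih (by omega) l hl
      have hj₁ := hrest₁ j le_rfl (by omega)
      have hcarry := reaches_carryLevels hl₁ hj (by omega) (by omega) htop₁
      have hval : ValidLevels h m k (carryLevels h l₁ j) := by
        refine ⟨fun i hi => ?_, fun i hi hik => ?_⟩
        · unfold carryLevels
          rw [if_neg (by omega), if_neg (by omega), hl₁.1 i hi]
        · have := hl₁.2 i hi hik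
          unfold carryLevels
          split_ifs <;> omega
      obtain ⟨l₂, hl₂, hr₂, htop₂, hrest₂⟩ := ihd (carryLevels h l₁ j) hval (by
        simp only [carryLevels, if_true]; omega)
      refine ⟨l₂, hl₂, (hr₁.trans hcarry).trans hr₂, htop₂, fun i hi hik => ?_⟩
      rw [hrest₂ i hi hik, ← hrest₁ i (by omega) hik]
      unfold carryLevels
      rw [if_neg (by omega), if_neg (by omega)]

/-- Some word shifts every index cyclically, except that it fixes the index `h - 1`. -/
theorem exists_shift_word (hh : 2 ≤ h) (hm : 2 ≤ m) (hk : h + 1 ≤ k) :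
    ∃ w, ∀ t i, i < k → ∃ t', pfaRun (natDelta h m k) (t, i) w =
      some (t', if i = h - 1 then h - 1 else (i + 1) % k) := by
  obtain ⟨l, hl, ⟨u, hu⟩, htop, -⟩ := exists_reaches_top (h := h) (m := m) k (by omega) le_rfl
    (fun i => if i < h then m else 0)
    ⟨fun i hi => if_pos hi, fun i hi _ => by simp only [if_neg (not_lt.2 hi)]; omega⟩
  refine ⟨PSym.s :: (u ++ [PSym.c, PSym.r]), fun t i hi => ?_⟩
  have hs : natDelta h m k (t, i) PSym.s = some (if i < h then m else 0, i) := by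
    simp only [natDelta]; split_ifs <;> rfl
  rw [pfaRun_cons, hs, Option.bind_some, pfaRun_append, hu i hi, Option.bind_some, pfaRun_cons]
  simp only [natDelta, Option.bind_some, pfaRun_singleton]
  have hCi := hl.1 i
  have hti := htop i
  by_cases hlast : i = k - 1
  · have hmod : (i + 1) % k = 0 := by rw [hlast, Nat.sub_add_cancel (by omega), Nat.mod_self]
    have := hti (by omega) hi
    rw [hmod, if_pos (by omega), if_neg (by omega), if_pos this, if_neg (by omega)]
    exact ⟨_, rfl⟩
  · rw [Nat.mod_eq_of_lt (show i + 1 < k by omega)]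
    by_cases hih : i = h - 1
    · rw [if_neg (by omega), if_pos (by omega), if_pos (hCi (by omega)), if_pos hih]
      exact ⟨_, rfl⟩
    · rw [if_neg hih]
      by_cases hlt : i < h
      · rw [if_pos (by omega), if_pos (hCi hlt)]
        exact ⟨_, rfl⟩
      · rw [if_neg (by omega), if_neg (by omega)]
        exact ⟨_, rfl⟩

theorem exists_gathering_word (hh : 2 ≤ h) (hm : 2 ≤ m) (hk : h + 1 ≤ k) (n : ℕ) :
    ∃ w, ∀ t i, i < k → (if i < h then h - 1 - i else h - 1 + k - i) ≤ n →
      ∃ t', pfaRun (natDelta h m k) (t, i) w = some (t', h - 1) := by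
  obtain ⟨u, hu⟩ := exists_shift_word hh hm hk
  induction n with
  | zero =>
    refine ⟨[], fun t i hi hd => ⟨t, ?_⟩⟩
    obtain rfl : i = h - 1 := by split_ifs at hd <;> omega
    rfl
  | succ n ih =>
    obtain ⟨w, hw⟩ := ih
    refine ⟨u ++ w, fun t i hi hd => ?_⟩
    obtain ⟨t', ht'⟩ := hu t i hi
    rw [pfaRun_append, ht', Option.bind_some]
    refine hw t' _ ?_ ?_
    · split_ifs
      · omega
      · exact Nat.mod_lt _ (by omega)
    · by_cases hih : i = h - 1
      · rw [if_pos hih, if_pos (by omega)]; omega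
      · rw [if_neg hih]
        by_cases hlast : i + 1 = k
        · rw [hlast, Nat.mod_self]
          split_ifs at hd ⊢ <;> omega
        · rw [Nat.mod_eq_of_lt (show i + 1 < k by omega)]
          split_ifs at hd ⊢ <;> omega

theorem exists_sync_word (hh : 2 ≤ h) (hm : 2 ≤ m) (hk : h + 1 ≤ k) :
    ∃ w p, ∀ t i, t ≤ m → i < k → pfaRun (natDelta h m k) (t, i) w = some p := by
  obtain ⟨w, hw⟩ := exists_gathering_word hh hm hk k
  refine ⟨w ++ [PSym.s], (m, h - 1), fun t i _ hi => ?_⟩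
  obtain ⟨t', ht'⟩ := hw t i hi (by split_ifs <;> omega)
  rw [pfaRun_append, ht', Option.bind_some, pfaRun_singleton]
  simp only [natDelta]
  rw [if_pos (by omega)]

end Existence

/-- For `h ≥ 2`, `m ≥ 2` and `k ≥ h+1`, the PFA `P_{h,m}^n` on `n = (m+1)k` states is
carefully synchronizing, and its shortest carefully synchronizing word has length at
least `f_{h,m}(k)`, where `f_{h,m}(k) = 0` for `1 ≤ k ≤ h` and
`f_{h,m}(k) = (m−1)·(1 + Σ_{j=1}^{h} f_{h,m}(k−j))` for `k ≥ h+1`. -/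
theorem PHM_care_sync (h m k : ℕ) (hh : 2 ≤ h) (hm : 2 ≤ m) (hk : h + 1 ≤ k)
    (f : ℕ → ℕ)
    (hf0 : ∀ j : ℕ, 1 ≤ j → j ≤ h → f j = 0)
    (hfrec : ∀ j : ℕ, h + 1 ≤ j →
      f j = (m - 1) * (1 + ∑ i ∈ Finset.Icc 1 h, f (j - i))) :
    (∃ w : List PSym, IsCareSyncWord (PHMdelta h m k hh hm hk) w) ∧
      ∀ w : List PSym, IsCareSyncWord (PHMdelta h m k hh hm hk) w → f k ≤ w.length := by
  simp only [isCareSyncWord_iff_natDelta]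
  exact ⟨exists_sync_word hh hm hk,
    fun w ⟨p, hp⟩ => le_length_of_sync hh hm hk hf0 hfrec p w hp⟩
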